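/- arXiv:2403.19772 — 11 statements merged into one kernel-verified Lean document; each statement's English description precedes it below -/
import Mathlib

section
/- Let (C, J) be a small site and let E = Sheaf J (Type u) be the Grothendieck topos of sheaves of types on it. If E has enough projectives, then for every tower X : ℕᵒᵖ ⥤ E all of whose transition maps X(n+1) ⟶ X(n) are epimorphisms, the projection from the limit of X to X(0) is an epimorphism (i.e., E satisfies dependent choice DC₀). -/
/-!
Take a projective `P` with an epimorphism `Projective.π (X 0) : P ⟶ X 0`. The functor `Hom(P, -)`
preserves limits and, `P` being projective, turns the tower of epimorphisms into a tower of
surjections of sets. Dependent choice in sets (`Types.surjective_π_app_zero_of_surjective_map`)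
then says that every map `P ⟶ X 0` factors through `lim X`. Applied to `Projective.π (X 0)`, this
exhibits `limit.π X 0` as the second factor of an epimorphism, so it is itself an epimorphism.
-/

open CategoryTheory Limits Opposite

universe u

/-- DC₀ in a Grothendieck topos with enough projectives: for every tower of
epimorphisms, the projection from the limit to the bottom object is an epimorphism. -/
theorem stmt0 {C : Type u} [SmallCategory C] (J : GrothendieckTopology C)
    [EnoughProjectives (Sheaf J (Type u))]
    (X : ℕᵒᵖ ⥤ Sheaf J (Type u))
    (hX : ∀ n : ℕ, Epi (X.map (homOfLE (Nat.le_succ n)).op)) :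
    Epi (limit.π X (op 0)) := by
  let P := Projective.over (X.obj (op 0))
  have hsurj := Types.surjective_π_app_zero_of_surjective_map
    (isLimitOfPreserves (coyoneda.obj (op P)) (limit.isLimit X))
    (fun n (f : P ⟶ X.obj (op n)) =>
      ⟨Projective.factorThru f (X.map (homOfLE (Nat.le_succ n)).op),
        Projective.factorThru_comp f (X.map (homOfLE (Nat.le_succ n)).op)⟩)
  obtain ⟨g, hg⟩ := hsurj (Projective.π (X.obj (op 0)))
  exact epi_of_epi_fac (show g ≫ limit.π X (op 0) = Projective.π (X.obj (op 0)) from hg)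
end

section
/- Let (C, J) be a small site and let E = Sheaf J (Type u) be the Grothendieck topos of sheaves of types on it. If E has enough projectives, then for every sequence of epimorphisms f_k : A_k ⟶ B_k (k ∈ ℕ) in E, the induced map on countable products ∏_k A_k ⟶ ∏_k B_k is an epimorphism (i.e., E satisfies countable choice CC₀). -/
open CategoryTheory Limits Opposite

universe u

/-- CC₀ in a Grothendieck topos with enough projectives: countable products of
epimorphisms are epimorphisms. -/
theorem stmt1 {C : Type u} [SmallCategory C] (J : GrothendieckTopology C)
    [EnoughProjectives (Sheaf J (Type u))]
    (A B : ℕ → Sheaf J (Type u)) (f : ∀ k, A k ⟶ B k) (hf : ∀ k, Epi (f k)) :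
    Epi (Limits.Pi.map f) := by
  -- Cover the product `∏ B` by a projective object; the components of the cover lift through
  -- each `f k`, and the lifts assemble to a factorization of the cover through `Pi.map f`.
  refine epi_of_epi_fac (f := Pi.lift fun k ↦
    Projective.factorThru (Projective.π (∏ᶜ B) ≫ Pi.π B k) (f k))
    (h := Projective.π (∏ᶜ B)) ?_
  ext1 k
  simp
end

section
/- Let (C, J) be a small site and E = Sheaf J (Type u). If E satisfies DC₀ (for every tower of epimorphisms the projection from the limit to the bottom object is an epimorphism), then E satisfies CC₀ (for every sequence of epimorphisms f_k : A_k ⟶ B_k, k ∈ ℕ, the induced map ∏_k A_k ⟶ ∏_k B_k on countable products is an epimorphism). -/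
/-!
The product map `∏ A ⟶ ∏ B` is the projection to the bottom of the tower
`⋯ ⟶ ∏_{m < n} A m × ∏_{m ≥ n} B m ⟶ ⋯ ⟶ ∏ B`, whose limit is `∏ A`
(`Limits.SequentialProduct.isLimit`). The `n`-th transition map changes only the `n`-th factor, by
`f n`, so it is a base change of `f n` along a projection (`isPullback_piMap`). Epimorphisms of
sheaves of types are the locally surjective maps, and these are stable under base change
(`epi_of_isPullback_sheaf`), so all transition maps are epimorphisms and dependent choice applies
to this tower.
-/

open CategoryTheory Limits Opposite

universe u

lemma epi_of_isPullback_sheaf {C : Type u} [SmallCategory C] {J : GrothendieckTopology C}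
    {P X Y Z : Sheaf J (Type u)} {t : P ⟶ X} {l : P ⟶ Y} {r : X ⟶ Z} {b : Y ⟶ Z}
    (h : IsPullback t l r b) [Epi b] : Epi t := by
  rw [← Sheaf.isLocallySurjective_iff_epi]
  have hb : Sheaf.IsLocallySurjective b := (Sheaf.isLocallySurjective_iff_epi b).2 inferInstance
  refine ⟨fun {U} s => ?_⟩
  refine J.superset_covering ?_
    (Presheaf.IsLocallySurjective.imageSieve_mem (self := hb) (r.hom.app (op U) s))
  rintro V g ⟨y, hy⟩
  have hV := (h.map (sheafToPresheaf J (Type u))).map ((evaluation _ _).obj (op V))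
  obtain ⟨z, hz, -⟩ := Types.exists_of_isPullback hV (X.obj.map g.op s) y
    ((NatTrans.naturality_apply r.hom g.op s).trans hy.symm)
  exact ⟨z, hz⟩

/-- A product of morphisms that are all isomorphisms except possibly the one at index `n` is a
base change of that one: the other components of a lift are obtained by inverting `q m`. -/
lemma isPullback_piMap {D : Type*} [Category* D] {ι : Type*} {X Y : ι → D} [HasProduct X]
    [HasProduct Y] (q : ∀ m, X m ⟶ Y m) (n : ι) (hq : ∀ m, m ≠ n → IsIso (q m)) :
    IsPullback (Limits.Pi.map q) (Pi.π X n) (Pi.π Y n) (q n) := by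
  refine ⟨⟨by simp⟩, ⟨PullbackCone.isLimitAux' _ fun s => ?_⟩⟩
  have key : ∀ m, ∃ l : s.pt ⟶ X m, l ≫ q m = s.fst ≫ Pi.π Y m ∧
      ∀ e : n = m, l = s.snd ≫ eqToHom (by rw [e]) := by
    intro m
    by_cases e : n = m
    · subst e
      exact ⟨s.snd, s.condition.symm, by simp⟩
    · have := hq m (Ne.symm e)
      exact ⟨s.fst ≫ Pi.π Y m ≫ inv (q m), by simp, fun h => absurd h e⟩
  choose l hl hl' using key
  have fac₁ : Pi.lift l ≫ Limits.Pi.map q = s.fst := Pi.hom_ext _ _ fun m => by simpa using hl m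
  have fac₂ : Pi.lift l ≫ Pi.π X n = s.snd := by simpa using hl' n rfl
  have uniq : ∀ k : s.pt ⟶ ∏ᶜ X, k ≫ Limits.Pi.map q = s.fst → k ≫ Pi.π X n = s.snd →
      k = Pi.lift l := by
    intro k h₁ h₂
    refine Pi.hom_ext _ _ fun m => ?_
    by_cases e : n = m
    · subst e
      exact h₂.trans fac₂.symm
    · have := hq m (Ne.symm e)
      rw [← cancel_mono (q m)]
      simp [hl, ← h₁]
  exact ⟨Pi.lift l, fac₁, fac₂, fun {k} h₁ h₂ => uniq k h₁ h₂⟩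

open SequentialProduct in
lemma epi_functorMap_sheaf {C : Type u} [SmallCategory C] {J : GrothendieckTopology C}
    {A B : ℕ → Sheaf J (Type u)} (f : ∀ k, A k ⟶ B k) (hf : ∀ k, Epi (f k)) (n : ℕ) :
    Epi (functorMap f n) := by
  rw [functorMap]
  refine @epi_of_isPullback_sheaf _ _ _ _ _ _ _ _ _ _ _ (isPullback_piMap _ n ?_) ?_
  · intro m hm
    split
    · infer_instance
    · split
      · omega
      · infer_instance
  · split
    · omega
    · split
      · infer_instance
      · omega

/-- In a Grothendieck topos, DC₀ (towers of epimorphisms have epimorphic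
projection from the limit to the bottom) implies CC₀ (countable products of
epimorphisms are epimorphisms). -/
theorem stmt2 {C : Type u} [SmallCategory C] (J : GrothendieckTopology C)
    (hDC : ∀ (X : ℕᵒᵖ ⥤ Sheaf J (Type u)),
      (∀ n : ℕ, Epi (X.map (homOfLE (Nat.le_succ n)).op)) →
      Epi (limit.π X (op 0)))
    (A B : ℕ → Sheaf J (Type u)) (f : ∀ k, A k ⟶ B k) (hf : ∀ k, Epi (f k)) :
    Epi (Limits.Pi.map f) := by
  have h₀ : Epi (limit.π (Functor.ofOpSequence (SequentialProduct.functorMap f)) (op 0)) := by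
    refine hDC _ fun n => ?_
    have := epi_functorMap_sheaf f hf n
    rw [← Functor.ofOpSequence_map_homOfLE_succ (SequentialProduct.functorMap f) n] at this
    exact this
  have h₁ : Epi ((SequentialProduct.cone f).π.app (op 0)) := by
    rw [← IsLimit.conePointUniqueUpToIso_hom_comp (SequentialProduct.isLimit f)
      (limit.isLimit _) (op 0)]
    exact epi_comp' inferInstance h₀
  rw [SequentialProduct.cone_π_app] at h₁
  replace h₁ : @Epi _ _ (∏ᶜ A) (∏ᶜ fun m => if _ : m < 0 then A m else B m)
      (Limits.Pi.map _) := h₁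
  -- The bottom object of the tower is `∏ B` because no index `m` satisfies `m < 0`.
  have h₂ : Epi (Limits.Pi.map fun m => eqToHom
      (SequentialProduct.functorObj_eq_neg (M := A) (N := B) (Nat.not_lt_zero m))) :=
    inferInstance
  have h₃ := epi_comp' h₁ h₂
  rw [Limits.Pi.map_comp_map] at h₃
  simpa using h₃
end

section
/- Let (C, J) be a small site and E = Sheaf J (Type u). The following are equivalent: (i) for every sequence of epimorphisms f_k : A_k ⟶ B_k (k ∈ ℕ) in E, the induced map ∏_k A_k ⟶ ∏_k B_k is an epimorphism; (ii) for every object X of E, the same property holds for countable products computed in the slice category Over X; (iii) there exists an object E₀ of E such that the unique map E₀ ⟶ ⊤ to the terminal object is an epimorphism and the property of (ii) holds in Over E₀; (iv) for every object X of E and every sequence of objects A_k of Over X whose structure maps to the terminal object of Over X are epimorphisms, the structure map of the product ∏_k A_k computed in Over X to the terminal object of Over X is an epimorphism. -/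
/-!
The only topos-theoretic input is that epimorphisms are stable under base change, which holds
because epimorphisms of sheaves of types are the locally surjective maps and sections preserve
pullbacks. Epimorphisms in a slice are the morphisms whose underlying map is an epimorphism, so
each implication becomes a statement about maps in the topos. In each case the map to be shown
epimorphic is not computed: it suffices to exhibit some epimorphism factoring through it.

* (i) ⇒ (ii): for `f k : A k ⟶ B k` over `X`, pull back `∏ (A k).left ⟶ ∏ (B k).left` along the
  comparison from the product of the `B k` in `Over X`. The result is an epimorphism which factors
  through the induced map of products in `Over X`.
* (ii) ⇒ (iii): take `E₀ = ⊤`.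
* (iii) ⇒ (iv): for epimorphisms `A k ⟶ X`, form the `E₀ ⨯ A k ⟶ E₀ ⨯ X` over `E₀` and pull the
  induced map of products over `E₀` back along the diagonal of `E₀ ⨯ X`. The resulting epimorphism,
  composed with the projection `E₀ ⨯ X ⟶ X` (epimorphic since `E₀ ⟶ ⊤` is), factors through
  the product of the `A k` over `X`.
* (iv) ⇒ (i): apply (iv) over `X = ∏ B k` to the pullbacks of the `f k` along the projections;
  the structure map of their product factors through `∏ A k ⟶ ∏ B k`.
-/

open CategoryTheory Limits Opposite

universe u

namespace CountableChoice

/-- Epimorphisms of sheaves of types are stable under base change: an epimorphism is a locally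
surjective map, and sections over a fixed object preserve pullbacks. -/
lemma epi_snd_of_isPullback {C : Type u} [SmallCategory C] {J : GrothendieckTopology C}
    {P A Y X : Sheaf J (Type u)} {p : P ⟶ A} {q : P ⟶ Y} {f : A ⟶ X} {g : Y ⟶ X}
    (h : IsPullback p q f g) [hf : Epi f] : Epi q := by
  rw [← Sheaf.isLocallySurjective_iff_epi] at hf ⊢
  refine ⟨fun {U} s => J.superset_covering ?_
    (Presheaf.imageSieve_mem J f.hom (U := op U) (g.hom.app (op U) s))⟩
  rintro V i ⟨a, ha⟩
  have hV := h.map (sheafToPresheaf J (Type u) ⋙ (evaluation _ _).obj (op V))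
  obtain ⟨t, -, ht⟩ := Types.exists_of_isPullback hV a (Y.obj.map i.op s)
    (ha.trans (NatTrans.naturality_apply g.hom i.op s).symm)
  exact ⟨t, ht⟩

section General

variable {E : Type*} [Category E]

lemma epi_left [HasBinaryProducts E] {X : E} {A B : Over X} (f : A ⟶ B) [Epi f] :
    Epi f.left :=
  have := (Over.forget X).preservesEpimorphisms_of_adjunction (Over.forgetAdjStar X)
  inferInstanceAs (Epi ((Over.forget X).map f))

/-- The structure map of an object of `Over X` is its map to the terminal object. -/
lemma epi_terminal_from_iff [HasBinaryProducts E] {X : E} (A : Over X) :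
    Epi (terminal.from A) ↔ Epi A.hom := by
  have hw : (terminal.from A).left ≫ (⊤_ (Over X)).hom = A.hom := Over.w _
  have : IsIso (⊤_ (Over X)).hom := by
    have e := terminalIsTerminal.uniqueUpToIso (Over.mkIdTerminal (X := X))
    have h : e.hom.left ≫ 𝟙 X = (⊤_ (Over X)).hom := Over.w e.hom
    rw [← h]
    have : IsIso e.hom.left := inferInstanceAs (IsIso ((Over.forget X).map e.hom))
    exact IsIso.comp_isIso' this (inferInstanceAs (IsIso (𝟙 X)))
  constructor
  · intro
    have := epi_left (terminal.from A)
    rw [← hw]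
    infer_instance
  · intro h
    rw [← hw] at h
    have : Epi (terminal.from A).left := by
      have h2 : (terminal.from A).left =
          ((terminal.from A).left ≫ (⊤_ (Over X)).hom) ≫ inv (⊤_ (Over X)).hom := by simp
      rw [h2]
      infer_instance
    exact Over.epi_of_epi_left _

lemma isPullback_prod_map [HasBinaryProducts E] (Z : E) {A X : E} (g : A ⟶ X) :
    IsPullback prod.snd (prod.map (𝟙 Z) g) g prod.snd := by
  refine ⟨⟨by simp⟩, ⟨PullbackCone.IsLimit.mk _
    (fun s => prod.lift (s.snd ≫ prod.fst) s.fst) ?_ ?_ ?_⟩⟩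
  · intro s
    exact prod.lift_snd _ _
  · intro s
    have := s.condition
    refine (prod.lift_map _ _ _ _).trans ?_
    rw [this, Category.comp_id, ← prod.comp_lift, prod.lift_fst_snd]
    exact Category.comp_id _
  · intro s m h1 h2
    apply Limits.prod.hom_ext
    · refine Eq.trans ?_ (prod.lift_fst _ _).symm
      simp [← h2]
    · exact h1.trans (prod.lift_snd _ _).symm

end General

variable {C : Type u} [SmallCategory C] {J : GrothendieckTopology C}

lemma slice_of_global
    (h : ∀ (A B : ℕ → Sheaf J (Type u)) (f : ∀ k, A k ⟶ B k),
      (∀ k, Epi (f k)) → Epi (Limits.Pi.map f))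
    (X : Sheaf J (Type u)) (A B : ℕ → Over X) (f : ∀ k, A k ⟶ B k)
    (hf : ∀ k, Epi (f k)) : Epi (Limits.Pi.map f) := by
  have := h _ _ (fun k => (f k).left) fun k => epi_left (f k)
  let c : (∏ᶜ B).left ⟶ ∏ᶜ fun k => (B k).left := Pi.lift fun k => (Pi.π B k).left
  let p := pullback.fst (Limits.Pi.map fun k => (f k).left) c
  let q := pullback.snd (Limits.Pi.map fun k => (f k).left) c
  have hq : Epi q := epi_snd_of_isPullback (IsPullback.of_hasPullback _ _)
  have w (k : ℕ) : (p ≫ Pi.π _ k) ≫ (f k).left = q ≫ (Pi.π B k).left := by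
    have := pullback.condition (f := Limits.Pi.map fun k => (f k).left) (g := c) =≫ Pi.π _ k
    simpa [c] using this
  let l : Over.mk (q ≫ (∏ᶜ B).hom) ⟶ ∏ᶜ A :=
    Pi.lift fun k => Over.homMk (p ≫ Pi.π _ k) (by
      have := w k =≫ (B k).hom
      simpa using this)
  let q' : Over.mk (q ≫ (∏ᶜ B).hom) ⟶ ∏ᶜ B := Over.homMk q
  have hq' : Epi q' := by
    have : Epi q'.left := hq
    exact Over.epi_of_epi_left _
  have fac : l ≫ Limits.Pi.map f = q' := by
    refine Pi.hom_ext _ _ fun k => ?_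
    ext1
    simpa [l, q'] using w k
  exact epi_of_epi_fac fac

lemma terminal_of_slice_cover (E₀ : Sheaf J (Type u)) [Epi (terminal.from E₀)]
    (h : ∀ (A B : ℕ → Over E₀) (f : ∀ k, A k ⟶ B k),
      (∀ k, Epi (f k)) → Epi (Limits.Pi.map f))
    (X : Sheaf J (Type u)) (A : ℕ → Over X) (hA : ∀ k, Epi (terminal.from (A k))) :
    Epi (terminal.from (∏ᶜ A)) := by
  simp only [epi_terminal_from_iff] at hA ⊢
  let A' (k : ℕ) : Over E₀ := Over.mk (prod.fst : E₀ ⨯ (A k).left ⟶ E₀)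
  let B' : Over E₀ := Over.mk (prod.fst : E₀ ⨯ X ⟶ E₀)
  let f (k : ℕ) : A' k ⟶ B' := Over.homMk (prod.map (𝟙 _) (A k).hom)
  have hf (k : ℕ) : Epi (f k) := by
    have : Epi (f k).left := epi_snd_of_isPullback (isPullback_prod_map E₀ (A k).hom)
    exact Over.epi_of_epi_left _
  have := h _ _ f hf
  have := epi_left (Limits.Pi.map f)
  let d : B' ⟶ ∏ᶜ fun _ : ℕ => B' := Pi.lift fun _ => 𝟙 B'
  let p := pullback.fst (Limits.Pi.map f).left d.left
  let q := pullback.snd (Limits.Pi.map f).left d.left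
  have hq : Epi q := epi_snd_of_isPullback (IsPullback.of_hasPullback _ _)
  have hX : Epi (prod.snd : E₀ ⨯ X ⟶ X) :=
    epi_snd_of_isPullback (f := terminal.from E₀) (g := terminal.from X)
      (IsPullback.of_is_product' (prodIsProd _ _) terminalIsTerminal)
  have w (k : ℕ) : (p ≫ (Pi.π A' k).left) ≫ (f k).left = q := by
    have h1 := pullback.condition (f := (Limits.Pi.map f).left) (g := d.left) =≫
      (Pi.π (fun _ : ℕ => B') k).left
    simp only [Category.assoc, ← Over.comp_left] at h1
    rw [Pi.map_π, Pi.lift_π] at h1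
    simpa [p, q] using h1
  let l : Over.mk (q ≫ prod.snd : _ ⟶ X) ⟶ ∏ᶜ A :=
    Pi.lift fun k => Over.homMk ((p ≫ (Pi.π A' k).left) ≫ prod.snd) (by
      have := w k =≫ prod.snd
      simpa [f] using this)
  have hqX : Epi (q ≫ prod.snd : _ ⟶ X) := epi_comp _ _
  have fac : l.left ≫ (∏ᶜ A).hom = (q ≫ prod.snd : _ ⟶ X) := Over.w l
  exact epi_of_epi_fac fac

lemma global_of_terminal
    (h : ∀ (X : Sheaf J (Type u)) (A : ℕ → Over X),
      (∀ k, Epi (terminal.from (A k))) → Epi (terminal.from (∏ᶜ A)))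
    (A B : ℕ → Sheaf J (Type u)) (f : ∀ k, A k ⟶ B k) (hf : ∀ k, Epi (f k)) :
    Epi (Limits.Pi.map f) := by
  let A' (k : ℕ) : Over (∏ᶜ B) := Over.mk (pullback.snd (f k) (Pi.π B k))
  have := h _ A' fun k => (epi_terminal_from_iff _).2
    (epi_snd_of_isPullback (IsPullback.of_hasPullback (f k) (Pi.π B k)))
  rw [epi_terminal_from_iff] at this
  let l : (∏ᶜ A').left ⟶ ∏ᶜ A :=
    Pi.lift fun k => (Pi.π A' k).left ≫ pullback.fst (f k) (Pi.π B k)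
  have fac : l ≫ Limits.Pi.map f = (∏ᶜ A').hom := by
    refine Pi.hom_ext _ _ fun k => ?_
    have hk : (Pi.π A' k).left ≫ pullback.snd (f k) (Pi.π B k) = (∏ᶜ A').hom :=
      Over.w (Pi.π A' k)
    simp [l, pullback.condition, ← hk]
  exact epi_of_epi_fac fac

end CountableChoice

/-- Equivalent characterizations of CC₀ in a Grothendieck topos: (i) countable
products of epimorphisms are epimorphisms; (ii) the same holds in every slice;
(iii) the same holds in the slice over some well-supported object; (iv) in every
slice, countable products of objects whose structure map to the terminal object
is an epimorphism again have epimorphic structure map. -/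
theorem stmt3 {C : Type u} [SmallCategory C] (J : GrothendieckTopology C) :
    List.TFAE [
      ∀ (A B : ℕ → Sheaf J (Type u)) (f : ∀ k, A k ⟶ B k),
        (∀ k, Epi (f k)) → Epi (Limits.Pi.map f),
      ∀ (X : Sheaf J (Type u)) (A B : ℕ → Over X) (f : ∀ k, A k ⟶ B k),
        (∀ k, Epi (f k)) → Epi (Limits.Pi.map f),
      ∃ E₀ : Sheaf J (Type u), Epi (terminal.from E₀) ∧
        ∀ (A B : ℕ → Over E₀) (f : ∀ k, A k ⟶ B k),
          (∀ k, Epi (f k)) → Epi (Limits.Pi.map f),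
      ∀ (X : Sheaf J (Type u)) (A : ℕ → Over X),
        (∀ k, Epi (terminal.from (A k))) → Epi (terminal.from (∏ᶜ A))] := by
  tfae_have 1 → 2 := CountableChoice.slice_of_global
  tfae_have 2 → 3 := fun h =>
    ⟨⊤_ _, by rw [terminal.hom_ext (terminal.from _) (𝟙 _)]; infer_instance, h _⟩
  tfae_have 3 → 4 := fun ⟨E₀, _, h⟩ => CountableChoice.terminal_of_slice_cover E₀ h
  tfae_have 4 → 1 := CountableChoice.global_of_terminal
  tfae_finish
end

section
/- There exists a sequence (A_k)_{k ∈ ℕ} of sheaves of types on the topological space [0,1] (the unit interval with its subspace topology from ℝ) such that for every k the unique map A_k ⟶ ⊤ to the terminal sheaf is an epimorphism, yet the product sheaf ∏_k A_k is an initial object of the category of sheaves of types on [0,1]. In particular, the map ∏_k A_k ⟶ ⊤ is not an epimorphism, so the topos of sheaves on [0,1] does not satisfy CC₀. -/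
/-!
For each `k`, let `A k` be the sheaf whose sections over `U` are the locally constant functions
`f : U → [0,1]` with `|x - f x| < 1/(k+1)` for all `x ∈ U`; this is the coproduct, over all centres
`c`, of the sheaves represented by the balls of radius `1/(k+1)` around `c`. The constant function
`c` is a section near `c`, so `A k ⟶ ⊤` is locally surjective, hence epi.

A locally constant function is constant on every interval contained in its domain `U`. So if
`A k` has a section over `U`, any two points of an interval `C ⊆ U` are within `1/(k+1)` of a
common centre, and are less than `2/(k+1)` apart. A nonempty open `U` contains an interval with two
distinct points, and for large `k` these contradict the bound; hence `∏ᶜ A` has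
no section over a nonempty open set. A sheaf with this property is initial, because every sheaf
has exactly one section over the empty set.
-/

open CategoryTheory Limits TopCat

universe u

open TopologicalSpace Opposite

/-- The predicate on functions `f : U → [0,1]` of being constant with value some `c` such that
`U` lies in the ball of radius `1/(k+1)` around `c`. -/
def nearConst (k : ℕ) :
    PrelocalPredicate (fun _ : TopCat.of unitInterval => ULift.{u} unitInterval) where
  pred {U} f := ∃ c : unitInterval, ∀ x : U, f x = ULift.up c ∧
    dist (show unitInterval from x.1) c < 1 / ((k : ℝ) + 1)
  res i _ := fun ⟨c, hc⟩ => ⟨c, fun x => hc ⟨x.1, i.le x.2⟩⟩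

/-- The coproduct of the sheaves represented by all balls of radius `1/(k+1)` in `[0,1]`,
encoded as the sheaf of locally constant choices of a centre of a ball containing the point. -/
noncomputable def ballSheaf (k : ℕ) :
    Sheaf (Opens.grothendieckTopology (TopCat.of unitInterval)) (Type u) :=
  subsheafToTypes (nearConst.{u} k).sheafify

/-- Sections of the terminal sheaf are unique, as evaluation at an open set preserves limits. -/
noncomputable abbrev uniqueTerminalSections (V : Opens (TopCat.of unitInterval)) :
    Unique ((⊤_ (Sheaf (Opens.grothendieckTopology (TopCat.of unitInterval)) (Type u))).obj.obj
      (op V)) :=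
  Types.isTerminalEquivUnique _ (IsTerminal.isTerminalObj
    (sheafToPresheaf _ _ ⋙ (evaluation _ (Type u)).obj (op V)) _ terminalIsTerminal)

lemma epi_ballSheaf (k : ℕ) : Epi (terminal.from (ballSheaf.{u} k)) := by
  have : Sheaf.IsLocallySurjective (terminal.from (ballSheaf.{u} k)) := by
    constructor
    intro U s x hx
    let c : unitInterval := x
    have hk : 0 < 1 / ((k : ℝ) + 1) := by positivity
    let B : Opens (TopCat.of unitInterval) :=
      ⟨Metric.ball (α := unitInterval) c (1 / ((k : ℝ) + 1)), Metric.isOpen_ball⟩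
    refine ⟨U ⊓ B, homOfLE inf_le_left, ?_, hx, Metric.mem_ball_self hk⟩
    refine ⟨⟨fun _ => ULift.up c, PrelocalPredicate.sheafifyOf ⟨c, fun y => ⟨rfl, y.2.2⟩⟩⟩, ?_⟩
    have := (uniqueTerminalSections.{u} (U ⊓ B)).instSubsingleton
    exact Subsingleton.elim _ _
  exact Sheaf.epi_of_isLocallySurjective' _

/-- A section is constant on any connected subset of its domain, so all points of such a subset
lie in one ball of radius `1/(k+1)`. -/
lemma dist_lt_of_section {k : ℕ} {U : Opens (TopCat.of unitInterval)}
    (s : (ballSheaf.{u} k).obj.obj (op U)) {C : Set unitInterval} (hC : _root_.IsPreconnected C)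
    (hCU : ∀ z ∈ C, (show TopCat.of unitInterval from z) ∈ U)
    {x y : unitInterval} (hx : x ∈ C) (hy : y ∈ C) :
    dist x y < 2 / ((k : ℝ) + 1) := by
  obtain ⟨f, hf⟩ := s
  have key : ∀ z : U, dist (show unitInterval from z.1) (f z).down < 1 / ((k : ℝ) + 1) ∧
      ∀ᶠ w in nhds z, f w = f z := by
    intro z
    obtain ⟨V, hzV, i, c, hc⟩ := hf z
    have hz := hc ⟨z.1, hzV⟩
    have hz1 : f z = ULift.up c := hz.1
    refine ⟨by rw [hz1]; exact hz.2, ?_⟩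
    have hV : {w : U | w.1 ∈ V} ∈ nhds z :=
      (V.isOpen.preimage continuous_subtype_val).mem_nhds hzV
    filter_upwards [hV] with w hw
    rw [hz1]
    exact (hc ⟨w.1, hw⟩).1
  have hloc : IsLocallyConstant f := (IsLocallyConstant.iff_eventually_eq f).2 fun z => (key z).2
  have hpre : _root_.IsPreconnected ((Subtype.val : U → TopCat.of unitInterval) ⁻¹' C) :=
    _root_.IsPreconnected.preimage_of_isOpenMap (f := (Subtype.val : U → TopCat.of unitInterval)) hC
      Subtype.val_injective U.isOpen.isOpenMap_subtype_val (fun z hz => ⟨⟨z, hCU z hz⟩, rfl⟩)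
  have heq : f ⟨x, hCU x hx⟩ = f ⟨y, hCU y hy⟩ := hloc.apply_eq_of_isPreconnected hpre hx hy
  have h1 := (key ⟨x, hCU x hx⟩).1
  have h2 := (key ⟨y, hCU y hy⟩).1
  rw [← heq] at h2
  have h3 : dist x y ≤ _ := dist_triangle_right x y (f ⟨x, hCU x hx⟩).down
  have h4 : 2 / ((k : ℝ) + 1) = 1 / ((k : ℝ) + 1) + 1 / ((k : ℝ) + 1) := by ring
  rw [h4]
  exact h3.trans_lt (add_lt_add h1 h2)

/-- A nonempty open subset of `[0,1]` contains an interval with more than one point, and that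
interval is too large to carry sections of all the `ballSheaf k`. -/
lemma eq_bot_of_sections {U : Opens (TopCat.of unitInterval)}
    (s : ∀ k, (ballSheaf.{u} k).obj.obj (op U)) : U = ⊥ := by
  by_contra hU
  obtain ⟨x, hx⟩ := (Opens.ne_bot_iff_nonempty U).1 hU
  let U' : Set unitInterval := (U : Set (TopCat.of unitInterval))
  have hUo : IsOpen U' := U.isOpen
  let x' : unitInterval := x
  have hxU : x' ∈ U' := hx
  obtain ⟨r, hr, hrU⟩ := Metric.isOpen_iff.1 hUo x' hxU
  let C : Set unitInterval := Metric.ball x' r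
  have hCo : IsOpen C := Metric.isOpen_ball
  have hxC : x' ∈ C := Metric.mem_ball_self hr
  have hC : C.OrdConnected := by
    refine ⟨fun a ha b hb z hz => ?_⟩
    have ha' : |(a : ℝ) - x'| < r := ha
    have hb' : |(b : ℝ) - x'| < r := hb
    have h1 : (a : ℝ) ≤ z := hz.1
    have h2 : (z : ℝ) ≤ b := hz.2
    change |(z : ℝ) - x'| < r
    rw [abs_lt] at *
    constructor <;> linarith
  obtain ⟨y, hy, hyx⟩ : ∃ y ∈ C, y ≠ x' :=
    (infinite_of_mem_nhds x' (hCo.mem_nhds hxC)).nontrivial.exists_ne x'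
  obtain ⟨k, hk⟩ := exists_nat_one_div_lt (half_pos (dist_pos.2 hyx))
  have h := dist_lt_of_section (s k) (C := C) hC.isPreconnected
    (fun z hz => hrU hz) hy hxC
  have h4 : 2 / ((k : ℝ) + 1) = 2 * (1 / ((k : ℝ) + 1)) := by ring
  linarith

lemma eq_bot_of_pi_section {U : Opens (TopCat.of unitInterval)}
    (s : (∏ᶜ ballSheaf.{u}).obj.obj (op U)) : U = ⊥ :=
  eq_bot_of_sections fun k => (Pi.π ballSheaf.{u} k).hom.app (op U) s

/-- A sheaf without sections over nonempty open sets is initial: every sheaf has exactly one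
section over the empty set. -/
noncomputable def isInitialOfSections
    (P : Sheaf (Opens.grothendieckTopology (TopCat.of unitInterval)) (Type u))
    (hP : ∀ U : Opens (TopCat.of unitInterval), P.obj.obj (op U) → U = ⊥) : IsInitial P :=
  have uniq (F : Sheaf (Opens.grothendieckTopology (TopCat.of unitInterval)) (Type u))
      (U : (Opens (TopCat.of unitInterval))ᵒᵖ) (s : P.obj.obj U) : Nonempty (Unique (F.obj.obj U)) :=
    ⟨Types.isTerminalEquivUnique _ (TopCat.Sheaf.isTerminalOfEqEmpty F (hP U.unop s))⟩
  IsInitial.ofUniqueHom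
    (fun F => ⟨{ app := fun U => ↾fun s => (uniq F U s).some.default
                 naturality := fun U V i => by
                  ext s
                  have := (uniq F V (P.obj.map i s)).some.instSubsingleton
                  exact Subsingleton.elim _ _ }⟩)
    (fun F m => by
      ext U s
      have := (uniq F U s).some.instSubsingleton
      exact Subsingleton.elim _ _)

theorem not_epi_pi : ¬ Epi (terminal.from (∏ᶜ ballSheaf.{u})) := by
  intro h
  have hs : Sheaf.IsLocallySurjective (terminal.from (∏ᶜ ballSheaf.{u})) :=
    (CategoryTheory.Sheaf.isLocallySurjective_iff_epi _).2 h
  obtain ⟨V, -, ⟨t, -⟩, hV⟩ := hs.imageSieve_mem (uniqueTerminalSections.{u} ⊤).default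
    (show TopCat.of unitInterval from (0 : unitInterval)) trivial
  have := eq_bot_of_pi_section t
  subst this
  exact hV

/-- Failure of CC₀ in sheaves on the unit interval `[0,1]`: there is a countable
family of well-supported sheaves of types (each `A k ⟶ ⊤` is an epimorphism)
whose product is an initial object; in particular the product is not
well-supported. Here the category of sheaves on `[0,1]` is realized as
`Sheaf (Opens.grothendieckTopology (TopCat.of unitInterval)) (Type u)`,
which is Mathlib's `TopCat.Sheaf (Type u) (TopCat.of unitInterval)`. -/
theorem stmt6 :
    ∃ A : ℕ → Sheaf (Opens.grothendieckTopology (TopCat.of unitInterval)) (Type u),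
      (∀ k, Epi (terminal.from (A k))) ∧
      Nonempty (IsInitial (∏ᶜ A)) ∧
      ¬ Epi (terminal.from (∏ᶜ A)) :=
  ⟨ballSheaf, epi_ballSheaf, ⟨isInitialOfSections _ fun _ => eq_bot_of_pi_section⟩, not_epi_pi⟩
end

section
/- In the category of condensed sets, for every tower X : ℕᵒᵖ ⥤ CondensedSet all of whose transition maps X(n+1) ⟶ X(n) are epimorphisms, the projection from the limit of X to X(0) is an epimorphism (i.e., the topos of condensed sets satisfies DC₀). -/
/-!
A morphism of condensed sets is an epimorphism iff it is surjective on sections over every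
extremally disconnected space `S` (`CondensedSet.epi_iff_surjective_on_stonean`): such spaces are
projective, so no covering of `S` is needed to lift a section. Taking sections over `S` also
preserves limits, which reduces the claim to towers of surjections of sets, where a compatible
sequence of preimages is chosen one step at a time.
-/

open CategoryTheory Limits Opposite

universe u

/-- DC₀ in the topos of condensed sets: for every tower of epimorphisms, the
projection from the limit to the bottom object is an epimorphism. -/
theorem stmt7 (X : ℕᵒᵖ ⥤ CondensedSet.{u})
    (hX : ∀ n : ℕ, Epi (X.map (homOfLE (Nat.le_succ n)).op)) :
    Epi (limit.π X (op 0)) := by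
  rw [CondensedSet.epi_iff_surjective_on_stonean]
  intro S
  let F : CondensedSet.{u} ⥤ Type (u + 1) :=
    sheafToPresheaf _ _ ⋙ (evaluation _ _).obj (op S.compHaus)
  exact Types.surjective_π_app_zero_of_surjective_map
    (isLimitOfPreserves F (limit.isLimit X))
    fun n ↦ (CondensedSet.epi_iff_surjective_on_stonean _).mp (hX n) S
end

section
/- In the category of condensed sets, for every sequence of epimorphisms f_k : A_k ⟶ B_k (k ∈ ℕ), the induced map ∏_k A_k ⟶ ∏_k B_k on countable products is an epimorphism (i.e., the topos of condensed sets satisfies CC₀). -/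
/-!
A morphism of condensed sets is an epimorphism iff it is surjective on sections over every
extremally disconnected `S` (`CondensedSet.epi_iff_surjective_on_stonean`), because such `S` are
projective among compact Hausdorff spaces. Taking sections over `S` preserves products, so the claim
reduces to the fact that a product of surjections of sets is surjective.
-/

open CategoryTheory Limits

universe u

/-- CC₀ in the topos of condensed sets: countable products of epimorphisms are
epimorphisms. -/
theorem stmt8 (A B : ℕ → CondensedSet.{u}) (f : ∀ k, A k ⟶ B k)
    (hf : ∀ k, Epi (f k)) :
    Epi (Limits.Pi.map f) := by
  rw [CondensedSet.epi_iff_surjective_on_stonean]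
  intro S y
  let G : CondensedSet.{u} ⥤ Type (u + 1) :=
    sheafToPresheaf _ _ ⋙ (evaluation _ _).obj (Opposite.op S.compHaus)
  have hx (k : ℕ) := (CondensedSet.epi_iff_surjective_on_stonean (f k)).1 (hf k) S
    (G.map (Pi.π B k) y)
  choose x hx using hx
  have hA := isLimitOfHasProductOfPreservesLimit G A
  have hB := isLimitOfHasProductOfPreservesLimit G B
  -- The family `x` is a section of a diagram on a discrete category, hence glues to a point `a`.
  obtain ⟨a, ha, -⟩ := (Types.isLimit_iff _).1 ⟨hA⟩ (fun k ↦ x k.as) (by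
    rintro ⟨i⟩ ⟨j⟩ ⟨⟨h⟩⟩
    obtain rfl : i = j := h
    simp)
  refine ⟨a, Concrete.isLimit_ext _ hB _ _ ?_⟩
  rintro ⟨k⟩
  have hak : G.map (Pi.π A k) a = x k := ha ⟨k⟩
  have hcomm : G.map (Limits.Pi.map f) ≫ G.map (Pi.π B k) = G.map (Pi.π A k) ≫ G.map (f k) := by
    rw [← G.map_comp, ← G.map_comp, Pi.map_π]
  calc G.map (Pi.π B k) (G.map (Limits.Pi.map f) a)
      = G.map (f k) (G.map (Pi.π A k) a) := ConcreteCategory.congr_hom hcomm a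
    _ = G.map (f k) (x k) := by rw [hak]
    _ = G.map (Pi.π B k) y := hx k
end

section
/- In the category of light condensed sets, for every tower X : ℕᵒᵖ ⥤ LightCondSet all of whose transition maps X(n+1) ⟶ X(n) are epimorphisms, the projection from the limit of X to X(0) is an epimorphism (i.e., the topos of light condensed sets satisfies DC₀), even though this topos does not have enough projectives. -/
/-!
Repleteness holds because a sequential limit of surjections of light profinite sets is again
light profinite and surjects onto the bottom term, so local lifts of a section can be chosen one
stage at a time and assembled over the limit of the resulting covers
(`coherentTopology.epi_π_app_zero_of_epi`).

Enough projectives fails already at `S = ℕ ∪ {∞}`. If a projective `P` surjects onto `S`, then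
local surjectivity gives one light profinite cover `φ : T → S` factoring through `P`, so `φ`
factors through *every* cover of `S`. Since `T` is sequentially compact, arbitrarily chosen
preimages `t n` of the points `n` have a convergent subsequence `t (ψ k)`. Colour `n : ℕ` by `χ n`
so that `χ (ψ k)` records the parity of `k`, and take the cover of `S` consisting of two points
over `∞`, one for each colour, and one point over each `n`, placed on the sheet `χ n`. A lift of
`φ` to this cover gives a continuous `Bool`-valued function on `T` whose value at `t (ψ k)` is the
parity of `k`, which contradicts convergence (`exists_colouring`).
-/

open CategoryTheory Limits Opposite

universe u

instance : HasLimitsOfSize.{0, 0} LightCondSet.{u} :=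
  hasLimitsOfSizeShrink.{0, 0, u, u} _

namespace LightCondDC

open Filter Topology

/-- For any map from a sequentially compact space hitting every natural number, some two-colouring
of `ℕ` does not extend continuously to the source. -/
lemma exists_colouring {T : Type*} [TopologicalSpace T] [SeqCompactSpace T]
    (φ : T → OnePoint ℕ) (hφ : Function.Surjective φ) :
    ∃ χ : ℕ → Bool, ¬ ∃ g : T → Bool, Continuous g ∧
      ∀ (t : T) (n : ℕ), φ t = (n : OnePoint ℕ) → g t = χ n := by
  classical
  choose t ht using fun n : ℕ ↦ hφ (n : OnePoint ℕ)
  obtain ⟨a, ψ, hψ, ha⟩ := SeqCompactSpace.tendsto_subseq t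
  refine ⟨fun n ↦ decide (∃ k, n = ψ (2 * k)), ?_⟩
  rintro ⟨g, hg, h⟩
  have hlim : Tendsto (fun k ↦ g (t (ψ k))) atTop (𝓝 (g a)) := (hg.tendsto a).comp ha
  rw [nhds_discrete, tendsto_pure, eventually_atTop] at hlim
  obtain ⟨N, hN⟩ := hlim
  have h₀ := hN (2 * N) (by omega)
  have h₁ := hN (2 * N + 1) (by omega)
  rw [h _ _ (ht _)] at h₀ h₁
  rw [← h₁, decide_eq_decide] at h₀
  obtain ⟨k, hk⟩ := h₀.1 ⟨N, rfl⟩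
  have := hψ.injective hk
  omega

/-- The two-sheeted cover of `ℕ ∪ {∞}` with both sheets over `∞`, and only the sheet `χ n`
over `n`. -/
def Cover (χ : ℕ → Bool) : Set (OnePoint ℕ × Bool) :=
  {y | ∀ n : ℕ, y.1 = (n : OnePoint ℕ) → y.2 = χ n}

lemma isClosed_cover (χ : ℕ → Bool) : IsClosed (Cover χ) := by
  rw [Cover, Set.ofPred_forall]
  refine isClosed_iInter fun n ↦ isClosed_imp ?_ ?_
  · have : IsOpen ({(n : OnePoint ℕ)} : Set (OnePoint ℕ)) := by
      simpa using OnePoint.isOpenEmbedding_coe.isOpenMap _ (isOpen_discrete ({n} : Set ℕ))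
    exact this.preimage continuous_fst
  · exact isClosed_eq continuous_snd continuous_const

instance (X : Type) [TopologicalSpace X] [TotallyDisconnectedSpace X] :
    TotallyDisconnectedSpace (ULift.{u} X) :=
  Homeomorph.ulift.symm.totallyDisconnectedSpace

instance (X : Type) [TopologicalSpace X] [SecondCountableTopology X] :
    SecondCountableTopology (ULift.{u} X) :=
  Topology.IsEmbedding.uliftDown.secondCountableTopology

lemma epi_map_of_surjective {Y S : LightProfinite.{u}} (π : Y ⟶ S) (hπ : Function.Surjective π) :
    Epi (lightProfiniteToLightCondSet.map π) := by
  rw [LightCondSet.epi_iff_locallySurjective_on_lightProfinite]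
  intro Z (y : Z ⟶ S)
  have := (LightProfinite.effectiveEpi_iff_surjective π).2 hπ
  obtain ⟨W, h, hh, i, e⟩ := Preregular.exists_fac y π
  exact ⟨W, h, (LightProfinite.effectiveEpi_iff_surjective h).1 hh, i, e⟩

/-- An object covered by a projective has a single light profinite cover refining all others. -/
lemma exists_universal_cover (h : EnoughProjectives LightCondSet.{u}) (S : LightProfinite.{u}) :
    ∃ (T : LightProfinite.{u}) (φ : T ⟶ S), Function.Surjective φ ∧
      ∀ (Y : LightProfinite.{u}) (π : Y ⟶ S), Function.Surjective π → ∃ g : T ⟶ Y, g ≫ π = φ := by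
  obtain ⟨⟨P, p⟩⟩ := h.presentation S.toCondensed
  obtain ⟨T, φ, hφ, x, hx⟩ :=
    (LightCondSet.epi_iff_locallySurjective_on_lightProfinite p).1 inferInstance S (𝟙 S)
  refine ⟨T, φ, hφ, fun Y π hπ ↦ ?_⟩
  have := epi_map_of_surjective π hπ
  obtain ⟨l, hl⟩ := Projective.factors p (lightProfiniteToLightCondSet.map π)
  refine ⟨l.hom.app ⟨T⟩ x, ?_⟩
  have e : (l ≫ lightProfiniteToLightCondSet.map π).hom.app ⟨T⟩ x = φ ≫ 𝟙 S := by
    rw [hl]; exact hx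
  rw [Category.comp_id] at e
  exact e

lemma not_enoughProjectives : ¬ EnoughProjectives LightCondSet.{u} := by
  intro h
  obtain ⟨T, φ, hφ, H⟩ := exists_universal_cover h (LightProfinite.of (ULift (OnePoint ℕ)))
  obtain ⟨χ, hχ⟩ := exists_colouring (fun t : T ↦ (φ t).down) fun s ↦
    let ⟨t, ht⟩ := hφ ⟨s⟩
    ⟨t, congrArg ULift.down ht⟩
  have : CompactSpace (Cover χ) := isCompact_iff_compactSpace.1 (isClosed_cover χ).isCompact
  let π : LightProfinite.of (ULift.{u} (Cover χ)) ⟶ LightProfinite.of (ULift.{u} (OnePoint ℕ)) :=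
    CompHausLike.ofHom _ ⟨fun y ↦ ⟨y.down.1.1⟩, by
      exact continuous_uliftUp.comp
        (continuous_fst.comp (continuous_subtype_val.comp continuous_uliftDown))⟩
  obtain ⟨g, hg⟩ := H _ π <| by
    rintro ⟨s⟩
    induction s using OnePoint.rec with
    | infty => exact ⟨⟨⟨(.infty, true), fun n hn ↦ (OnePoint.infty_ne_coe n hn).elim⟩⟩, rfl⟩
    | coe n =>
      exact ⟨⟨⟨(n, χ n), fun m hm ↦ congrArg χ (OnePoint.coe_injective hm)⟩⟩, rfl⟩
  refine hχ ⟨fun t ↦ (g t).down.1.2, ?_, fun t n hn ↦ (g t).down.2 n ?_⟩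
  · exact continuous_snd.comp (continuous_subtype_val.comp
      (continuous_uliftDown.comp g.hom.hom.continuous))
  · rw [← hn, ← hg]
    rfl

end LightCondDC

/-- DC₀ in the topos of light condensed sets: for every tower of epimorphisms,
the projection from the limit to the bottom object is an epimorphism — even
though this topos does not have enough projectives. -/
theorem stmt9 :
    (∀ (X : ℕᵒᵖ ⥤ LightCondSet.{u}),
      (∀ n : ℕ, Epi (X.map (homOfLE (Nat.le_succ n)).op)) →
      Epi (limit.π X (op 0))) ∧
    ¬ EnoughProjectives LightCondSet.{u} := by
  refine ⟨fun X hX ↦ ?_, LightCondDC.not_enoughProjectives⟩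
  refine coherentTopology.epi_π_app_zero_of_epi ?_ (limit.isLimit X) hX
  simp only [LightProfinite.effectiveEpi_iff_surjective]
  exact fun G h ↦ Concrete.surjective_π_app_zero_of_surjective_map (limit.isLimit G) h
end

section
/- In the category of light condensed sets, for every sequence of epimorphisms f_k : A_k ⟶ B_k (k ∈ ℕ), the induced map ∏_k A_k ⟶ ∏_k B_k on countable products is an epimorphism (i.e., the topos of light condensed sets satisfies CC₀). -/
/-!
Epimorphisms of light condensed sets are the maps along which every section over a light profinite
set `S` lifts after passing to a surjective cover of `S`. A section of `∏ B_k` over `S` is a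
sequence of sections `y_k` of `B_k`, and each `y_k` lifts to `A_k` over some cover `S_k ⟶ S`. The
fibre product `T` of all the `S_k` over `S` is again light profinite, because only countably many
factors occur, and `T ⟶ S` is surjective (choose a point in every fibre). All the `y_k` lift over
`T`, and these lifts form a section of `∏ A_k`.
-/

open CategoryTheory Limits

universe u

/-- Countably many surjective covers of a light profinite set have a common surjective refinement,
namely their fibre product. -/
lemma exists_common_cover (S : LightProfinite.{u}) (S' : ℕ → LightProfinite.{u})
    (φ : ∀ k, S' k ⟶ S) (hφ : ∀ k, Function.Surjective (φ k)) :
    ∃ (T : LightProfinite.{u}) (π : T ⟶ S) (_ : Function.Surjective π) (p : ∀ k, T ⟶ S' k),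
      ∀ k, p k ≫ φ k = π := by
  let Z : Set (S × ∀ k, S' k) := {z | ∀ k, φ k (z.2 k) = z.1}
  have hZ : IsClosed Z := by
    simp only [Z, Set.ofPred_forall]
    exact isClosed_iInter fun k ↦ isClosed_eq
      ((φ k).hom.hom.continuous.comp ((continuous_apply k).comp continuous_snd)) continuous_fst
  have : CompactSpace Z := isCompact_iff_compactSpace.mp hZ.isCompact
  refine ⟨LightProfinite.of Z, ConcreteCategory.ofHom ⟨fun z ↦ z.1.1, by fun_prop⟩, ?_,
    fun k ↦ ConcreteCategory.ofHom ⟨fun z ↦ z.1.2 k, by fun_prop⟩, ?_⟩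
  · intro s
    choose x hx using fun k ↦ hφ k s
    exact ⟨⟨(s, x), hx⟩, rfl⟩
  · intro k
    ext z
    exact z.2 k

/-- CC₀ in the topos of light condensed sets: countable products of
epimorphisms are epimorphisms. -/
theorem stmt10 (A B : ℕ → LightCondSet.{u}) (f : ∀ k, A k ⟶ B k)
    (hf : ∀ k, Epi (f k)) :
    Epi (Limits.Pi.map f) := by
  rw [LightCondSet.epi_iff_locallySurjective_on_lightProfinite]
  intro S y
  have h k := (LightCondSet.epi_iff_locallySurjective_on_lightProfinite (f k)).mp (hf k) S
    ((Pi.π B k).hom.app ⟨S⟩ y)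
  choose S' φ hφ x hx using h
  obtain ⟨T, π, hπ, p, hp⟩ := exists_common_cover S S' φ hφ
  -- By Yoneda, sections over `T` are maps out of the sheaf represented by `T`, so that the
  -- universal property of the product assembles the lifts.
  let J := coherentTopology LightProfinite.{u}
  let a (k : ℕ) : J.yoneda.obj T ⟶ A k := J.yonedaEquiv.symm ((A k).obj.map (p k).op (x k))
  refine ⟨T, π, hπ, J.yonedaEquiv (Pi.lift a), ?_⟩
  refine (J.yonedaEquiv_comp _ _).symm.trans ?_
  rw [← Equiv.eq_symm_apply]
  refine Pi.hom_ext _ _ fun k ↦ ?_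
  rw [Category.assoc, Pi.map_π, Pi.lift_π_assoc]
  apply J.yonedaEquiv.injective
  rw [J.yonedaEquiv_comp, J.yonedaEquiv_comp, Equiv.apply_symm_apply, Equiv.apply_symm_apply]
  have h1 := NatTrans.naturality_apply (f k).hom (p k).op (x k)
  have h2 := NatTrans.naturality_apply (Pi.π B k).hom π.op y
  refine h1.trans (Eq.trans ?_ h2.symm)
  rw [hx, ← hp k, op_comp]
  exact (Functor.map_comp_apply (B k).obj (φ k).op (p k).op _).symm
end

section
/- Let C be a category that has limits of shape ℕᵒᵖ and enough projectives. Then for every tower X : ℕᵒᵖ ⥤ C all of whose transition maps X(n+1) ⟶ X(n) are epimorphisms, the projection from the limit of X to X(0) is an epimorphism. -/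
/-!
Cover `X(0)` by a projective `P`. Since the transition maps are epimorphisms, the cover
`P ⟶ X(0)` lifts successively to maps `P ⟶ X(n)` compatible with the transition maps, hence
to a map `P ⟶ lim X`. Its composite with the projection `lim X ⟶ X(0)` is the chosen
epimorphism, so the projection is an epimorphism.
-/

open CategoryTheory Limits Opposite

universe v u

/-- In any category with limits of towers and enough projectives, the
projection from the limit of a tower of epimorphisms to the bottom object is
an epimorphism. -/
theorem stmt11 {C : Type u} [Category.{v} C] [HasLimitsOfShape ℕᵒᵖ C]
    [EnoughProjectives C]
    (X : ℕᵒᵖ ⥤ C) (hX : ∀ n : ℕ, Epi (X.map (homOfLE (Nat.le_succ n)).op)) :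
    Epi (limit.π X (op 0)) := by
  let P := Projective.over (X.obj (op 0))
  let f : ∀ n : ℕ, P ⟶ X.obj (op n) := fun n =>
    Nat.rec (motive := fun n => P ⟶ X.obj (op n)) (Projective.π (X.obj (op 0)))
      (fun n g => Projective.factorThru g (X.map (homOfLE (Nat.le_succ n)).op)) n
  have hf : ∀ n : ℕ, f (n + 1) ≫ X.map (homOfLE (Nat.le_succ n)).op = f n := fun n =>
    Projective.factorThru_comp (f n) (X.map (homOfLE (Nat.le_succ n)).op)
  let c : Cone X :=
    { pt := P
      π := NatTrans.ofOpSequence (F := (Functor.const ℕᵒᵖ).obj P) f fun n =>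
        (Category.id_comp (f n)).trans (hf n).symm }
  have hc : limit.lift X c ≫ limit.π X (op 0) = Projective.π (X.obj (op 0)) :=
    limit.lift_π c (op 0)
  have : Epi (limit.lift X c ≫ limit.π X (op 0)) := by
    rw [hc]
    infer_instance
  exact epi_of_epi (limit.lift X c) (limit.π X (op 0))
end

section
/- Let C be a category that has countable products and enough projectives. Then for every sequence of epimorphisms f_k : A_k ⟶ B_k (k ∈ ℕ) in C, the induced map ∏_k A_k ⟶ ∏_k B_k on products is an epimorphism. -/
open CategoryTheory Limits

universe v u

/-- In any category with countable products and enough projectives, countable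
products of epimorphisms are epimorphisms. -/
theorem stmt12 {C : Type u} [Category.{v} C] [HasCountableProducts C]
    [EnoughProjectives C]
    (A B : ℕ → C) (f : ∀ k, A k ⟶ B k) (hf : ∀ k, Epi (f k)) :
    Epi (Limits.Pi.map f) := by
  -- Lifting each component of an epimorphism from a projective onto `∏ᶜ B` along `f k`
  -- factors that epimorphism through `Pi.map f`, which is therefore itself epi.
  have h : Pi.lift (fun k => Projective.factorThru (Projective.π (∏ᶜ B) ≫ Pi.π B k) (f k)) ≫
      Limits.Pi.map f = Projective.π (∏ᶜ B) := by
    refine Pi.hom_ext _ _ fun k => ?_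
    simp
  exact epi_of_epi_fac h
end
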